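/- Define f : ℝ → ℝ by f(x) = −2·log(cosh x). Then for every x ∈ ℝ: f⁗(x) − 3·f′(x)·f‴(x) + 2·(f′(x))²·f″(x) − (f″(x))² = 0. -/

import Mathlib

/-!
With `D = d/dx`, the left-hand side of the equation is `(D - 2f′)(f‴ - f′f″)`, and
`f‴ - f′f″ = D (f″ - f′²/2)`. The equation therefore holds as soon as `f″ - f′²/2` is constant,
that is, as soon as `f′` solves a Riccati equation. For `f = -2 log cosh`, where `f′ = -2 tanh`,
this is `tanh′ = 1 - tanh²`, and the constant is `-2`.
-/

section IteratedDeriv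

variable {𝕜 F : Type*} [NontriviallyNormedField 𝕜] [NormedAddCommGroup F] [NormedSpace 𝕜 F]

theorem hasDerivAt_iteratedDeriv {f : 𝕜 → F} {x : 𝕜} {n : ℕ} (hf : ContDiffAt 𝕜 (n + 1) f x) :
    HasDerivAt (iteratedDeriv n f) (iteratedDeriv (n + 1) f x) x := by
  have hdiff : DifferentiableAt 𝕜 (iteratedDeriv n f) x := by
    rw [← iteratedDerivWithin_univ, ← differentiableWithinAt_univ]
    refine hf.contDiffWithinAt.differentiableWithinAt_iteratedDerivWithin ?_ ?_
    · exact_mod_cast n.lt_succ_self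
    · simpa only [Set.insert_eq_of_mem (Set.mem_univ x)] using uniqueDiffOn_univ
  rw [iteratedDeriv_succ]
  exact hdiff.hasDerivAt

end IteratedDeriv

section TubeCurvature

open Filter Topology

variable {𝕜 : Type*} [NontriviallyNormedField 𝕜] {f : 𝕜 → 𝕜} {x : 𝕜}

/-- The left-hand side of the zero-curvature equation of the tube hypersurface `v = h(x)`, written
in terms of `f = log h″`. It is `16` times the expression
`f_{zz̄z̄z̄} - 3f_{zz̄z̄}f_{z̄} + 2f_{zz̄}(f_{z̄})² - f_{zz̄}f_{z̄z̄}` for rigid hypersurfaces,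
the factor coming from `∂_z = ∂_{z̄} = (1/2) d/dx`. -/
noncomputable def tubeCurvature (f : 𝕜 → 𝕜) (x : 𝕜) : 𝕜 :=
  iteratedDeriv 4 f x - 3 * deriv f x * iteratedDeriv 3 f x
    + 2 * (deriv f x) ^ 2 * iteratedDeriv 2 f x - (iteratedDeriv 2 f x) ^ 2

theorem hasDerivAt_deriv_iteratedDeriv_two (hf : ContDiffAt 𝕜 2 f x) :
    HasDerivAt (deriv f) (iteratedDeriv 2 f x) x := by
  simpa only [iteratedDeriv_one] using hasDerivAt_iteratedDeriv (n := 1) hf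

theorem tubeCurvature_eq_deriv_sub_two_mul (hf : ContDiffAt 𝕜 4 f x) :
    tubeCurvature f x =
      deriv (fun y => iteratedDeriv 3 f y - deriv f y * iteratedDeriv 2 f y) x
        - 2 * deriv f x * (iteratedDeriv 3 f x - deriv f x * iteratedDeriv 2 f x) := by
  have h₁ : HasDerivAt (deriv f) (iteratedDeriv 2 f x) x :=
    hasDerivAt_deriv_iteratedDeriv_two (hf.of_le (by norm_num))
  have h₂ : HasDerivAt (iteratedDeriv 2 f) (iteratedDeriv 3 f x) x :=
    hasDerivAt_iteratedDeriv (hf.of_le (by norm_num))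
  have h₃ : HasDerivAt (iteratedDeriv 3 f) (iteratedDeriv 4 f x) x :=
    hasDerivAt_iteratedDeriv (hf.of_le (by norm_num))
  rw [(h₃.fun_sub (h₁.fun_mul h₂)).deriv, tubeCurvature]
  ring

theorem hasDerivAt_iteratedDeriv_two_sub_deriv_sq_div_two [NeZero (2 : 𝕜)]
    (hf : ContDiffAt 𝕜 3 f x) :
    HasDerivAt (fun y => iteratedDeriv 2 f y - deriv f y ^ 2 / 2)
      (iteratedDeriv 3 f x - deriv f x * iteratedDeriv 2 f x) x := by
  have h₁ : HasDerivAt (deriv f) (iteratedDeriv 2 f x) x :=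
    hasDerivAt_deriv_iteratedDeriv_two (hf.of_le (by norm_num))
  have h₂ : HasDerivAt (iteratedDeriv 2 f) (iteratedDeriv 3 f x) x :=
    hasDerivAt_iteratedDeriv (hf.of_le (by norm_num))
  refine (h₂.fun_sub ((h₁.fun_pow 2).div_const 2)).congr_deriv ?_
  have htwo : (2 : 𝕜) ≠ 0 := two_ne_zero
  push_cast
  field_simp

theorem tubeCurvature_eq_zero_of_riccati [NeZero (2 : 𝕜)] {c : 𝕜} (hf : ContDiffAt 𝕜 4 f x)
    (hriccati : ∀ᶠ y in 𝓝 x, iteratedDeriv 2 f y - deriv f y ^ 2 / 2 = c) :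
    tubeCurvature f x = 0 := by
  have hthird : ∀ᶠ y in 𝓝 x, iteratedDeriv 3 f y - deriv f y * iteratedDeriv 2 f y = 0 := by
    filter_upwards [hf.eventually (by simp), hriccati.eventually_nhds] with y hfy hy
    exact (hasDerivAt_iteratedDeriv_two_sub_deriv_sq_div_two (hfy.of_le (by norm_num))).unique
      ((hasDerivAt_const y c).congr_of_eventuallyEq hy)
  rw [tubeCurvature_eq_deriv_sub_two_mul hf, hthird.self_of_nhds, EventuallyEq.deriv_eq hthird,
    deriv_const, mul_zero, sub_zero]

end TubeCurvature

section LogCosh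

open Real

theorem hasDerivAt_tanh (x : ℝ) : HasDerivAt tanh (1 - tanh x ^ 2) x := by
  have hcosh : cosh x ≠ 0 := (cosh_pos x).ne'
  have htanh : tanh = sinh / cosh := funext tanh_eq_sinh_div_cosh
  rw [tanh_eq_sinh_div_cosh, htanh]
  refine ((hasDerivAt_sinh x).div (hasDerivAt_cosh x) hcosh).congr_deriv ?_
  field_simp

theorem deriv_log_cosh : deriv (fun x => log (cosh x)) = tanh :=
  funext fun x => (deriv_log_comp_eq_logDeriv differentiableAt_cosh (cosh_pos x).ne').trans
    (congrFun logDeriv_cosh x)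

theorem riccati_neg_two_mul_log_cosh (x : ℝ) :
    iteratedDeriv 2 (fun y => -2 * log (cosh y)) x
      - deriv (fun y => -2 * log (cosh y)) x ^ 2 / 2 = -2 := by
  rw [iteratedDeriv_succ, iteratedDeriv_one, deriv_const_mul_field', deriv_log_cosh,
    ((hasDerivAt_tanh x).const_mul (-2)).deriv]
  ring

theorem contDiff_log_cosh {n : WithTop ℕ∞} : ContDiff ℝ n (fun x => log (cosh x)) :=
  contDiff_cosh.log fun x => (cosh_pos x).ne'

end LogCosh

/-- `f(x) = −2 log cosh x` solves the tube zero-curvature equation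
`f⁗ − 3f′f‴ + 2(f′)²f″ − (f″)² = 0` on `ℝ`. -/
theorem stmt_18 (f : ℝ → ℝ) (hf : ∀ x : ℝ, f x = -2 * Real.log (Real.cosh x)) :
    ∀ x : ℝ,
      iteratedDeriv 4 f x - 3 * deriv f x * iteratedDeriv 3 f x
        + 2 * (deriv f x) ^ 2 * iteratedDeriv 2 f x - (iteratedDeriv 2 f x) ^ 2 = 0 := by
  intro x
  obtain rfl : f = fun y => -2 * Real.log (Real.cosh y) := funext hf
  exact tubeCurvature_eq_zero_of_riccati (contDiff_const.mul contDiff_log_cosh).contDiffAt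
    (.of_forall riccati_neg_two_mul_log_cosh)
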